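/- Let Z₁ and Z₂ be independent random variables on a probability space, each standard normally distributed (law gaussianReal 0 1). Let μ₁, μ₂ ∈ ℝ, σ₁, σ₂ > 0, ρ ∈ (-1,1), and define X₁ = μ₁ + σ₁·Z₁ and X₂ = μ₂ + σ₂·(ρ·Z₁ + √(1-ρ²)·Z₂), so that (X₁,X₂) is bivariate Gaussian with means (μ₁,μ₂), variances (σ₁²,σ₂²) and correlation ρ. Set θ = √(σ₁² + σ₂² − 2ρσ₁σ₂) (assumed positive) and δ = (μ₂ − μ₁)/θ, and let Y = min{X₁, X₂}. Then E[Y] = μ₁·Φ(δ) + μ₂·Φ(−δ) − θ·φ(δ), where φ and Φ denote the probability density function and cumulative distribution function of the standard normal distribution. -/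

import Mathlib

open MeasureTheory ProbabilityTheory

/-- The standard normal probability density function `φ`. -/
noncomputable def stdNormalPdf (x : ℝ) : ℝ :=
  (Real.sqrt (2 * Real.pi))⁻¹ * Real.exp (-x ^ 2 / 2)

/-- The standard normal cumulative distribution function `Φ`. -/
noncomputable def stdNormalCdf (x : ℝ) : ℝ :=
  ∫ t in Set.Iic x, stdNormalPdf t

/-!
Since `min X₁ X₂ = X₂ + min (X₁ - X₂) 0`, the mean of the minimum depends on the joint law only
through `E[X₂]` and the law of `X₁ - X₂`, which is Gaussian with mean `μ₁ - μ₂` and variance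
`θ ^ 2`. Standardizing that law leaves `∫ x in Iic δ, (x - δ) * φ x`, and `-φ` is an
antiderivative of `x * φ x`.
-/

lemma stdNormalPdf_eq_gaussianPDFReal : stdNormalPdf = gaussianPDFReal 0 1 := by
  ext x
  simp [stdNormalPdf, gaussianPDFReal]

lemma stdNormalPdf_neg (x : ℝ) : stdNormalPdf (-x) = stdNormalPdf x := by
  simp [stdNormalPdf]

lemma integrable_stdNormalPdf : Integrable stdNormalPdf :=
  stdNormalPdf_eq_gaussianPDFReal ▸ integrable_gaussianPDFReal 0 1

lemma integral_stdNormalPdf : ∫ x, stdNormalPdf x = 1 :=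
  stdNormalPdf_eq_gaussianPDFReal ▸ integral_gaussianPDFReal_eq_one 0 one_ne_zero

lemma stdNormalCdf_neg (x : ℝ) : stdNormalCdf (-x) = 1 - stdNormalCdf x := by
  have upper_tail : stdNormalCdf (-x) = ∫ t in Set.Ioi x, stdNormalPdf t := by
    simp_rw [stdNormalCdf, ← integral_comp_neg_Ioi, stdNormalPdf_neg]
  rw [upper_tail, eq_sub_iff_add_eq', ← integral_stdNormalPdf]
  exact intervalIntegral.integral_Iic_add_Ioi integrable_stdNormalPdf.integrableOn
    integrable_stdNormalPdf.integrableOn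

lemma integrable_mul_stdNormalPdf : Integrable fun x => x * stdNormalPdf x := by
  refine ((integrable_mul_exp_neg_mul_sq one_half_pos).const_mul
    (Real.sqrt (2 * Real.pi))⁻¹).congr (.of_forall fun x => ?_)
  simp only [stdNormalPdf]
  ring_nf

lemma hasDerivAt_stdNormalPdf (x : ℝ) : HasDerivAt stdNormalPdf (-(x * stdNormalPdf x)) x := by
  have exponent : HasDerivAt (fun x : ℝ => -x ^ 2 / 2) (-x) x :=
    ((hasDerivAt_pow 2 x).neg.div_const 2).congr_deriv (by ring)
  exact (exponent.exp.const_mul (Real.sqrt (2 * Real.pi))⁻¹).congr_deriv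
    (by simp only [stdNormalPdf]; ring)

lemma setIntegral_Iic_mul_stdNormalPdf (d : ℝ) :
    ∫ x in Set.Iic d, x * stdNormalPdf x = -stdNormalPdf d := by
  have tendsto_atBot : Filter.Tendsto stdNormalPdf Filter.atBot (nhds 0) :=
    tendsto_zero_of_hasDerivAt_of_integrableOn_Iic (a := d)
      (fun x _ => hasDerivAt_stdNormalPdf x) integrable_mul_stdNormalPdf.neg.integrableOn
      integrable_stdNormalPdf.integrableOn
  have ftc := integral_Iic_of_hasDerivAt_of_tendsto' (a := d)
    (fun x _ => hasDerivAt_stdNormalPdf x) integrable_mul_stdNormalPdf.neg.integrableOn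
    tendsto_atBot
  rw [integral_neg, sub_zero] at ftc
  exact neg_eq_iff_eq_neg.1 ftc

lemma integral_min_sub_zero_gaussianReal_zero_one (d : ℝ) :
    ∫ x, min (x - d) 0 ∂gaussianReal 0 1 = -stdNormalPdf d - d * stdNormalCdf d := by
  have density_mul_min (x : ℝ) : gaussianPDFReal 0 1 x • min (x - d) 0 =
      (Set.Iic d).indicator (fun x => x * stdNormalPdf x - d * stdNormalPdf x) x := by
    rw [← stdNormalPdf_eq_gaussianPDFReal, smul_eq_mul]
    rcases le_or_gt x d with hx | hx
    · rw [Set.indicator_of_mem (Set.mem_Iic.2 hx), min_eq_left (sub_nonpos.2 hx)]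
      ring
    · rw [Set.indicator_of_notMem (Set.notMem_Iic.2 hx), min_eq_right (sub_pos.2 hx).le, mul_zero]
  simp_rw [integral_gaussianReal_eq_integral_smul one_ne_zero, density_mul_min]
  rw [integral_indicator measurableSet_Iic,
    integral_sub integrable_mul_stdNormalPdf.integrableOn
      (integrable_stdNormalPdf.const_mul d).integrableOn,
    setIntegral_Iic_mul_stdNormalPdf, integral_const_mul, stdNormalCdf]

lemma gaussianReal_eq_map_gaussianReal_zero_one (m s : ℝ) :
    gaussianReal m (.mk (s ^ 2) (sq_nonneg s)) =
      (gaussianReal 0 1).map fun x => m + s * x := by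
  simpa using (gaussianReal_const_add (gaussianReal_const_mul
    (HasLaw.id (μ := gaussianReal 0 1)) s) m).map_eq.symm

lemma integral_min_zero_gaussianReal (m : ℝ) {s : ℝ} (hs : 0 < s) :
    ∫ x, min x 0 ∂gaussianReal m (.mk (s ^ 2) (sq_nonneg s)) =
      m * stdNormalCdf (-m / s) - s * stdNormalPdf (-m / s) := by
  have standardize (x : ℝ) : min (m + s * x) 0 = s * min (x - -m / s) 0 := by
    rw [mul_min_of_nonneg _ _ hs.le, mul_zero, mul_sub, mul_div_cancel₀ _ hs.ne', sub_neg_eq_add,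
      add_comm]
  rw [gaussianReal_eq_map_gaussianReal_zero_one,
    integral_map (by fun_prop) (by fun_prop : Measurable fun x : ℝ => min x 0).aestronglyMeasurable]
  simp_rw [standardize]
  rw [integral_const_mul, integral_min_sub_zero_gaussianReal_zero_one]
  field_simp
  ring

section RandomVariables

variable {Ω : Type*} {mΩ : MeasurableSpace Ω} {P : Measure Ω}

lemma hasLaw_const_add_mul_add_mul_gaussianReal {Z₁ Z₂ : Ω → ℝ} {m₁ m₂ : ℝ} {v₁ v₂ : NNReal}
    (hZ₁ : HasLaw Z₁ (gaussianReal m₁ v₁) P) (hZ₂ : HasLaw Z₂ (gaussianReal m₂ v₂) P)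
    (hindep : IndepFun Z₁ Z₂ P) (a b c : ℝ) :
    HasLaw (fun ω => c + (a * Z₁ ω + b * Z₂ ω))
      (gaussianReal (a * m₁ + b * m₂ + c)
        (.mk (a ^ 2) (sq_nonneg a) * v₁ + .mk (b ^ 2) (sq_nonneg b) * v₂)) P := by
  have scaled₁ := gaussianReal_const_mul hZ₁ a
  have scaled₂ := gaussianReal_const_mul hZ₂ b
  have scaled_indep : IndepFun (fun ω => a * Z₁ ω) (fun ω => b * Z₂ ω) P :=
    hindep.comp (measurable_const_mul a) (measurable_const_mul b)
  exact gaussianReal_const_add ⟨scaled₁.aemeasurable.add scaled₂.aemeasurable,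
    gaussianReal_add_gaussianReal_of_indepFun scaled_indep scaled₁.map_eq scaled₂.map_eq⟩ c

lemma hasLaw_correlated_gaussianReal {Z₁ Z₂ : Ω → ℝ} {ρ : ℝ}
    (hZ₁ : HasLaw Z₁ (gaussianReal 0 1) P) (hZ₂ : HasLaw Z₂ (gaussianReal 0 1) P)
    (hindep : IndepFun Z₁ Z₂ P) (hρ : ρ ^ 2 ≤ 1) (μ σ : ℝ) :
    HasLaw (fun ω => μ + σ * (ρ * Z₁ ω + Real.sqrt (1 - ρ ^ 2) * Z₂ ω))
      (gaussianReal μ (.mk (σ ^ 2) (sq_nonneg σ))) P := by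
  convert! hasLaw_const_add_mul_add_mul_gaussianReal hZ₁ hZ₂ hindep (σ * ρ)
    (σ * Real.sqrt (1 - ρ ^ 2)) μ using 2
  · ring
  · ring
  · ext
    simp only [NNReal.coe_mk, NNReal.coe_add, mul_one, mul_pow, Real.sq_sqrt (sub_nonneg.2 hρ)]
    ring

lemma hasLaw_sub_correlated_gaussianReal {Z₁ Z₂ : Ω → ℝ} {ρ : ℝ}
    (hZ₁ : HasLaw Z₁ (gaussianReal 0 1) P) (hZ₂ : HasLaw Z₂ (gaussianReal 0 1) P)
    (hindep : IndepFun Z₁ Z₂ P) (hρ : ρ ^ 2 ≤ 1) (μ₁ μ₂ σ₁ σ₂ : ℝ)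
    {θ : ℝ} (hθ : θ ^ 2 = σ₁ ^ 2 + σ₂ ^ 2 - 2 * ρ * σ₁ * σ₂) :
    HasLaw (fun ω => μ₁ + σ₁ * Z₁ ω - (μ₂ + σ₂ * (ρ * Z₁ ω + Real.sqrt (1 - ρ ^ 2) * Z₂ ω)))
      (gaussianReal (μ₁ - μ₂) (.mk (θ ^ 2) (sq_nonneg θ))) P := by
  convert! hasLaw_const_add_mul_add_mul_gaussianReal hZ₁ hZ₂ hindep (σ₁ - σ₂ * ρ)
    (-(σ₂ * Real.sqrt (1 - ρ ^ 2))) (μ₁ - μ₂) using 2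
  · ring
  · ring
  · ext
    simp only [NNReal.coe_mk, NNReal.coe_add, mul_one, neg_sq, mul_pow,
      Real.sq_sqrt (sub_nonneg.2 hρ), hθ]
    ring

theorem mean_min_bivariate_gaussian_general {X₁ X₂ : Ω → ℝ} {μ₁ μ₂ θ δ : ℝ}
    (hX₂ : Integrable X₂ P) (hμ₂ : ∫ ω, X₂ ω ∂P = μ₂)
    (hsub : HasLaw (fun ω => X₁ ω - X₂ ω)
      (gaussianReal (μ₁ - μ₂) (.mk (θ ^ 2) (sq_nonneg θ))) P)
    (hθ : 0 < θ) (hδ : δ = (μ₂ - μ₁) / θ) :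
    ∫ ω, min (X₁ ω) (X₂ ω) ∂P =
      μ₁ * stdNormalCdf δ + μ₂ * stdNormalCdf (-δ) - θ * stdNormalPdf δ := by
  have min_eq (ω : Ω) : min (X₁ ω) (X₂ ω) = X₂ ω + min (X₁ ω - X₂ ω) 0 := by
    rw [← min_add_add_left, add_sub_cancel, add_zero]
  have integrable_min : Integrable (fun ω => min (X₁ ω - X₂ ω) 0) P :=
    hsub.hasGaussianLaw.integrable.inf (integrable_zero _ _ _)
  have integral_min : ∫ ω, min (X₁ ω - X₂ ω) 0 ∂P =
      (μ₁ - μ₂) * stdNormalCdf δ - θ * stdNormalPdf δ := by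
    rw [hδ, ← neg_sub μ₁ μ₂, ← integral_min_zero_gaussianReal (μ₁ - μ₂) hθ]
    exact hsub.integral_comp
      (by fun_prop : Measurable fun x : ℝ => min x 0).aestronglyMeasurable
  simp_rw [min_eq]
  rw [integral_add hX₂ integrable_min, hμ₂, integral_min, stdNormalCdf_neg]
  ring

end RandomVariables

/-- The expected value of the minimum of two jointly Gaussian random variables:
`E[Y] = μ₁·Φ(δ) + μ₂·Φ(−δ) − θ·φ(δ)`. -/
theorem mean_min_bivariate_gaussian
    {Ω : Type*} [MeasureSpace Ω] [IsProbabilityMeasure (ℙ : Measure Ω)]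
    (Z₁ Z₂ : Ω → ℝ) (hZ₁m : Measurable Z₁) (hZ₂m : Measurable Z₂)
    (hZ₁ : Measure.map Z₁ ℙ = gaussianReal 0 1)
    (hZ₂ : Measure.map Z₂ ℙ = gaussianReal 0 1)
    (hindep : IndepFun Z₁ Z₂ ℙ)
    (μ₁ μ₂ σ₁ σ₂ ρ : ℝ) (hσ₁ : 0 < σ₁) (hσ₂ : 0 < σ₂)
    (hρ : ρ ∈ Set.Ioo (-1 : ℝ) 1)
    (X₁ X₂ Y : Ω → ℝ)
    (hX₁ : X₁ = fun ω => μ₁ + σ₁ * Z₁ ω)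
    (hX₂ : X₂ = fun ω => μ₂ + σ₂ * (ρ * Z₁ ω + Real.sqrt (1 - ρ ^ 2) * Z₂ ω))
    (hY : Y = fun ω => min (X₁ ω) (X₂ ω))
    (θ δ : ℝ)
    (hθ : θ = Real.sqrt (σ₁ ^ 2 + σ₂ ^ 2 - 2 * ρ * σ₁ * σ₂))
    (hθpos : 0 < θ)
    (hδ : δ = (μ₂ - μ₁) / θ) :
    ∫ ω, Y ω = μ₁ * stdNormalCdf δ + μ₂ * stdNormalCdf (-δ) - θ * stdNormalPdf δ := by
  subst hX₁ hX₂ hY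
  have lawZ₁ : HasLaw Z₁ (gaussianReal 0 1) := ⟨hZ₁m.aemeasurable, hZ₁⟩
  have lawZ₂ : HasLaw Z₂ (gaussianReal 0 1) := ⟨hZ₂m.aemeasurable, hZ₂⟩
  have hρsq : ρ ^ 2 ≤ 1 := ((sq_lt_one_iff_abs_lt_one ρ).2 (abs_lt.2 hρ)).le
  have hθsq : θ ^ 2 = σ₁ ^ 2 + σ₂ ^ 2 - 2 * ρ * σ₁ * σ₂ :=
    hθ ▸ Real.sq_sqrt (Real.sqrt_pos.1 (hθ ▸ hθpos)).le
  have lawX₂ := hasLaw_correlated_gaussianReal lawZ₁ lawZ₂ hindep hρsq μ₂ σ₂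
  exact mean_min_bivariate_gaussian_general lawX₂.hasGaussianLaw.integrable
    (lawX₂.integral_eq.trans integral_id_gaussianReal)
    (hasLaw_sub_correlated_gaussianReal lawZ₁ lawZ₂ hindep hρsq μ₁ μ₂ σ₁ σ₂ hθsq) hθpos hδ
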